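/- The set of two-qubit Pauli operators {X⊗I, I⊗X, Z⊗I, I⊗Z} is contextual: there exist a determining tree for Y⊗Y over this set and a determining tree for −(Y⊗Y) over this set whose determining sets are identical (both equal to the full set {X⊗I, I⊗X, Z⊗I, I⊗Z}). -/

import Mathlib

/-!
The Peres–Mermin square. Tensor products multiply factorwise, and `X * Z = -i Y`, `Z * X = i Y`.
Hence `(X⊗Z) * (Z⊗X) = (-i)(i) Y⊗Y = Y⊗Y`, while `(X⊗X) * (Z⊗Z) = (-i)(-i) Y⊗Y = -(Y⊗Y)`.
In both products the two factors commute, and each factor is itself the product of two commuting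
one-qubit operators: `X⊗Z = (X⊗I) * (I⊗Z)`, and so on. This gives two trees of depth two with
opposite root labels, in each of which every one of `X⊗I`, `I⊗X`, `Z⊗I`, `I⊗Z` occurs at exactly
one leaf. These four operators are distinct, so both determining sets are the full set.
-/

open Matrix

/-- Index type for `n` qubits: `Fin n → Fin 2` has cardinality `2^n`. -/
abbrev QubitIdx (n : ℕ) := Fin n → Fin 2

/-- `2^n × 2^n` complex matrices. -/
abbrev Mat (n : ℕ) := Matrix (QubitIdx n) (QubitIdx n) ℂ

/-- The four single-qubit Pauli matrices `I, X, Y, Z`. -/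
noncomputable def pauliMat : Fin 4 → Matrix (Fin 2) (Fin 2) ℂ :=
  ![1, !![0, 1; 1, 0], !![0, -Complex.I; Complex.I, 0], !![1, 0; 0, -1]]

/-- The tensor product `P₁ ⊗ ⋯ ⊗ Pₙ` of single-qubit Pauli matrices. -/
noncomputable def pauliTensor (n : ℕ) (f : Fin n → Fin 4) : Mat n :=
  fun i k => ∏ j, pauliMat (f j) (i j) (k j)

/-- An `n`-qubit Pauli operator: `ε • P₁ ⊗ ⋯ ⊗ Pₙ` with `ε ∈ {1, -1}`. -/
def IsPauli (n : ℕ) (M : Mat n) : Prop :=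
  ∃ (ε : ℂ) (f : Fin n → Fin 4), (ε = 1 ∨ ε = -1) ∧ M = ε • pauliTensor n f

/-- Two operators anticommute. -/
def PAntiCommute {n : ℕ} (A B : Mat n) : Prop := A * B = -(B * A)

/-- Finite rooted trees whose nodes are labeled by `2^n × 2^n` matrices.
A `leaf` has no children; a `node` has a (finite) list of children. -/
inductive PTree (n : ℕ) : Type
  | leaf : Mat n → PTree n
  | node : Mat n → List (PTree n) → PTree n

namespace PTree

variable {n : ℕ}

/-- The label of the root of the tree. -/
def label : PTree n → Mat n
  | leaf M => M
  | node M _ => M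

mutual
/-- The multiset of leaf labels of the tree. -/
def leaves : PTree n → Multiset (Mat n)
  | .leaf M => {M}
  | .node _ cs => leavesList cs
/-- The multiset of leaf labels of a list of trees. -/
def leavesList : List (PTree n) → Multiset (Mat n)
  | [] => 0
  | c :: cs => c.leaves + leavesList cs
end

mutual
/-- The list of leaf labels of the tree in depth-first (left-to-right) order. -/
def leafList : PTree n → List (Mat n)
  | .leaf M => [M]
  | .node _ cs => leafListList cs
/-- The list of leaf labels of a list of trees, in depth-first order. -/
def leafListList : List (PTree n) → List (Mat n)
  | [] => []
  | c :: cs => c.leafList ++ leafListList cs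
end

mutual
/-- The multiset of all node labels of the tree. -/
def nodeLabels : PTree n → Multiset (Mat n)
  | .leaf M => {M}
  | .node M cs => M ::ₘ nodeLabelsList cs
/-- The multiset of all node labels of a list of trees. -/
def nodeLabelsList : List (PTree n) → Multiset (Mat n)
  | [] => 0
  | c :: cs => c.nodeLabels + nodeLabelsList cs
end

/-- The multiset of labels of all nodes at depth ≥ 2, i.e. strictly below
the children of the root. -/
def deepLabels : PTree n → Multiset (Mat n)
  | .leaf _ => 0
  | .node _ cs => (cs.map fun c =>
      match c with
      | .leaf _ => (0 : Multiset (Mat n))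
      | .node _ cs' => nodeLabelsList cs').sum

/-- A valid determining tree over a set `S`: every leaf is labeled by an
element of `S`, every node is labeled by a Pauli operator, and for every
internal node, the labels of its children pairwise commute and the label of
the node is the matrix product of the labels of its children. -/
inductive Valid (S : Set (Mat n)) : PTree n → Prop
  | leaf {M : Mat n} : M ∈ S → Valid S (PTree.leaf M)
  | node {M : Mat n} {cs : List (PTree n)} :
      IsPauli n M →
      M = (cs.map label).prod →
      cs.Pairwise (fun a b => Commute a.label b.label) →
      (∀ c ∈ cs, Valid S c) →
      Valid S (PTree.node M cs)

/-- Every internal node of the tree has at most two children. -/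
inductive Binary : PTree n → Prop
  | leaf (M : Mat n) : Binary (PTree.leaf M)
  | node (M : Mat n) (cs : List (PTree n)) :
      cs.length ≤ 2 → (∀ c ∈ cs, Binary c) → Binary (PTree.node M cs)

open scoped Classical in
/-- The determining set of a tree: the set of operators occurring with odd
total multiplicity among its leaves. -/
noncomputable def detSet (τ : PTree n) : Set (Mat n) :=
  {M | Odd (τ.leaves.count M)}

end PTree

/-- `τ` is a determining tree for `A` over `S`. -/
def IsDetTree {n : ℕ} (S : Set (Mat n)) (A : Mat n) (τ : PTree n) : Prop :=
  PTree.Valid S τ ∧ τ.label = A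

/-- A set `S` of Pauli operators is contextual if for some Pauli operator `A`
there are determining trees for `A` and for `-A` over `S` with identical
determining sets. -/
def Contextual (n : ℕ) (S : Set (Mat n)) : Prop :=
  ∃ (A : Mat n) (τ τ' : PTree n), IsPauli n A ∧
    IsDetTree S A τ ∧ IsDetTree S (-A) τ' ∧ τ.detSet = τ'.detSet

/-- Tensor products multiply factorwise: if each one-qubit product is a scalar times a Pauli
matrix, the scalars multiply up. -/
lemma pauliTensor_mul {n : ℕ} {f g h : Fin n → Fin 4} (c : Fin n → ℂ)
    (H : ∀ j, pauliMat (f j) * pauliMat (g j) = c j • pauliMat (h j)) :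
    pauliTensor n f * pauliTensor n g = (∏ j, c j) • pauliTensor n h := by
  ext i k
  have H' : ∀ j, ∑ y, pauliMat (f j) (i j) y * pauliMat (g j) y (k j)
      = c j * pauliMat (h j) (i j) (k j) := fun j => by
    have := congrFun (congrFun (H j) (i j)) (k j)
    simpa only [Matrix.mul_apply, Matrix.smul_apply, smul_eq_mul] using this
  simp only [Matrix.mul_apply, Matrix.smul_apply, smul_eq_mul, pauliTensor,
    ← Finset.prod_mul_distrib, ← H', Finset.prod_univ_sum, Fintype.piFinset_univ]

lemma pauliMat_id_mul (p : Fin 4) : pauliMat 0 * pauliMat p = (1 : ℂ) • pauliMat p := by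
  simp [pauliMat]

lemma pauliMat_mul_id (p : Fin 4) : pauliMat p * pauliMat 0 = (1 : ℂ) • pauliMat p := by
  simp [pauliMat]

lemma pauliMat_X_mul_Z : pauliMat 1 * pauliMat 3 = (-Complex.I) • pauliMat 2 := by
  ext i j
  fin_cases i <;> fin_cases j <;> simp [pauliMat]

lemma pauliMat_Z_mul_X : pauliMat 3 * pauliMat 1 = Complex.I • pauliMat 2 := by
  ext i j
  fin_cases i <;> fin_cases j <;> simp [pauliMat]

/-- The two-qubit case of `pauliTensor_mul`. -/
lemma pauliTensor_two_mul {a b a' b' p q : Fin 4} {c d : ℂ}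
    (h₀ : pauliMat a * pauliMat a' = c • pauliMat p)
    (h₁ : pauliMat b * pauliMat b' = d • pauliMat q) :
    pauliTensor 2 ![a, b] * pauliTensor 2 ![a', b'] = (c * d) • pauliTensor 2 ![p, q] := by
  rw [pauliTensor_mul (h := ![p, q]) ![c, d] (fun j => by fin_cases j <;> assumption)]
  simp [Fin.prod_univ_two]

lemma left_mul_right (p q : Fin 4) :
    pauliTensor 2 ![p, 0] * pauliTensor 2 ![0, q] = pauliTensor 2 ![p, q] := by
  simpa using pauliTensor_two_mul (pauliMat_mul_id p) (pauliMat_id_mul q)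

lemma right_mul_left (p q : Fin 4) :
    pauliTensor 2 ![0, q] * pauliTensor 2 ![p, 0] = pauliTensor 2 ![p, q] := by
  simpa using pauliTensor_two_mul (pauliMat_id_mul p) (pauliMat_mul_id q)

lemma XZ_mul_ZX :
    pauliTensor 2 ![1, 3] * pauliTensor 2 ![3, 1] = pauliTensor 2 ![2, 2] := by
  simpa using pauliTensor_two_mul pauliMat_X_mul_Z pauliMat_Z_mul_X

lemma ZX_mul_XZ :
    pauliTensor 2 ![3, 1] * pauliTensor 2 ![1, 3] = pauliTensor 2 ![2, 2] := by
  simpa using pauliTensor_two_mul pauliMat_Z_mul_X pauliMat_X_mul_Z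

lemma XX_mul_ZZ :
    pauliTensor 2 ![1, 1] * pauliTensor 2 ![3, 3] = -pauliTensor 2 ![2, 2] := by
  simpa using pauliTensor_two_mul pauliMat_X_mul_Z pauliMat_X_mul_Z

lemma ZZ_mul_XX :
    pauliTensor 2 ![3, 3] * pauliTensor 2 ![1, 1] = -pauliTensor 2 ![2, 2] := by
  simpa using pauliTensor_two_mul pauliMat_Z_mul_X pauliMat_Z_mul_X

lemma isPauli_pauliTensor {n : ℕ} (f : Fin n → Fin 4) : IsPauli n (pauliTensor n f) :=
  ⟨1, f, Or.inl rfl, (one_smul _ _).symm⟩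

lemma isPauli_neg_pauliTensor {n : ℕ} (f : Fin n → Fin 4) : IsPauli n (-pauliTensor n f) :=
  ⟨-1, f, Or.inr rfl, by simp⟩

namespace PTree

/-- The depth-one tree for `P⊗Q` with leaves `P⊗I` and `I⊗Q`. -/
noncomputable def splitTree (p q : Fin 4) : PTree 2 :=
  node (pauliTensor 2 ![p, q]) [leaf (pauliTensor 2 ![p, 0]), leaf (pauliTensor 2 ![0, q])]

lemma valid_node_pair {n : ℕ} {S : Set (Mat n)} {M : Mat n} {s t : PTree n} (hM : IsPauli n M)
    (hs : Valid S s) (ht : Valid S t) (h₁ : s.label * t.label = M) (h₂ : t.label * s.label = M) :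
    Valid S (node M [s, t]) := by
  refine Valid.node hM (by simp [h₁]) ?_ ?_
  · have hc : Commute s.label t.label := h₁.trans h₂.symm
    simp [hc]
  · simpa using ⟨hs, ht⟩

lemma valid_splitTree {S : Set (Mat 2)} {p q : Fin 4} (hp : pauliTensor 2 ![p, 0] ∈ S)
    (hq : pauliTensor 2 ![0, q] ∈ S) : Valid S (splitTree p q) :=
  valid_node_pair (isPauli_pauliTensor _) (.leaf hp) (.leaf hq)
    (left_mul_right p q) (right_mul_left p q)

/-- When no leaf label repeats, the determining set is the set of all leaf labels. -/
lemma detSet_of_nodup {n : ℕ} {τ : PTree n} (h : τ.leaves.Nodup) :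
    τ.detSet = {M | M ∈ τ.leaves} := by
  classical
  ext M
  by_cases hM : M ∈ τ.leaves
  · simp [detSet, hM, Multiset.count_eq_one_of_mem h hM]
  · simp [detSet, hM]

lemma leaves_node_splitTree (M : Mat 2) (p q p' q' : Fin 4) :
    (node M [splitTree p q, splitTree p' q']).leaves =
      ↑[pauliTensor 2 ![p, 0], pauliTensor 2 ![0, q],
        pauliTensor 2 ![p', 0], pauliTensor 2 ![0, q']] := by
  simp [leaves, leavesList, splitTree, ← Multiset.singleton_add, ← Multiset.cons_coe, add_assoc]

end PTree

/-- The four one-qubit operators are distinct: the entries at `(00, 10)` and `(00, 01)` single out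
`X⊗I` and `I⊗X`, and the entry at `(10, 10)` separates `Z⊗I` from `I⊗Z`. -/
lemma nodup_generators :
    [pauliTensor 2 ![1, 0], pauliTensor 2 ![0, 1],
      pauliTensor 2 ![3, 0], pauliTensor 2 ![0, 3]].Nodup := by
  have hne : ∀ {A B : Mat 2} (i k : QubitIdx 2), A i k ≠ B i k → A ≠ B :=
    fun i k h e => h (by rw [e])
  have h₁ : pauliTensor 2 ![1, 0] ≠ pauliTensor 2 ![0, 1] :=
    hne ![0, 0] ![1, 0] (by simp [pauliTensor, pauliMat, Fin.prod_univ_two])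
  have h₂ : pauliTensor 2 ![1, 0] ≠ pauliTensor 2 ![3, 0] :=
    hne ![0, 0] ![1, 0] (by simp [pauliTensor, pauliMat, Fin.prod_univ_two])
  have h₃ : pauliTensor 2 ![1, 0] ≠ pauliTensor 2 ![0, 3] :=
    hne ![0, 0] ![1, 0] (by simp [pauliTensor, pauliMat, Fin.prod_univ_two])
  have h₄ : pauliTensor 2 ![0, 1] ≠ pauliTensor 2 ![3, 0] :=
    hne ![0, 0] ![0, 1] (by simp [pauliTensor, pauliMat, Fin.prod_univ_two])
  have h₅ : pauliTensor 2 ![0, 1] ≠ pauliTensor 2 ![0, 3] :=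
    hne ![0, 0] ![0, 1] (by simp [pauliTensor, pauliMat, Fin.prod_univ_two])
  have h₆ : pauliTensor 2 ![3, 0] ≠ pauliTensor 2 ![0, 3] :=
    hne ![1, 0] ![1, 0] (by simp [pauliTensor, pauliMat, Fin.prod_univ_two]; norm_num)
  simp [h₁, h₂, h₃, h₄, h₅, h₆]

/-- Peres–Mermin: The set `{X⊗I, I⊗X, Z⊗I, I⊗Z}` is contextual:
there are determining trees for `Y⊗Y` and for `-(Y⊗Y)` over it whose
determining sets are both the full set. -/
theorem peres_mermin_contextual (S : Set (Mat 2))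
    (hS : S = {pauliTensor 2 ![1, 0], pauliTensor 2 ![0, 1],
               pauliTensor 2 ![3, 0], pauliTensor 2 ![0, 3]}) :
    Contextual 2 S ∧
      ∃ τ τ' : PTree 2,
        IsDetTree S (pauliTensor 2 ![2, 2]) τ ∧
        IsDetTree S (-(pauliTensor 2 ![2, 2])) τ' ∧
        τ.detSet = S ∧ τ'.detSet = S := by
  have key : ∃ τ τ' : PTree 2,
      IsDetTree S (pauliTensor 2 ![2, 2]) τ ∧
      IsDetTree S (-(pauliTensor 2 ![2, 2])) τ' ∧
      τ.detSet = S ∧ τ'.detSet = S := by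
    refine ⟨.node (pauliTensor 2 ![2, 2]) [.splitTree 1 3, .splitTree 3 1],
      .node (-pauliTensor 2 ![2, 2]) [.splitTree 1 1, .splitTree 3 3],
      ⟨?_, rfl⟩, ⟨?_, rfl⟩, ?_, ?_⟩
    · exact PTree.valid_node_pair (isPauli_pauliTensor _)
        (PTree.valid_splitTree (by simp [hS]) (by simp [hS]))
        (PTree.valid_splitTree (by simp [hS]) (by simp [hS])) XZ_mul_ZX ZX_mul_XZ
    · exact PTree.valid_node_pair (isPauli_neg_pauliTensor _)
        (PTree.valid_splitTree (by simp [hS]) (by simp [hS]))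
        (PTree.valid_splitTree (by simp [hS]) (by simp [hS])) XX_mul_ZZ ZZ_mul_XX
    -- The leaves read `XI, IZ, ZI, IX`: the last three generators in reverse.
    · have hperm : [pauliTensor 2 ![1, 0], pauliTensor 2 ![0, 3],
          pauliTensor 2 ![3, 0], pauliTensor 2 ![0, 1]].Perm
          [pauliTensor 2 ![1, 0], pauliTensor 2 ![0, 1],
            pauliTensor 2 ![3, 0], pauliTensor 2 ![0, 3]] :=
        .cons _ (List.reverse_perm [_, _, _])
      rw [PTree.detSet_of_nodup, PTree.leaves_node_splitTree, Multiset.coe_eq_coe.2 hperm, hS]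
      · ext M; simp
      · rw [PTree.leaves_node_splitTree, Multiset.coe_eq_coe.2 hperm]
        exact nodup_generators
    · rw [PTree.detSet_of_nodup, PTree.leaves_node_splitTree, hS]
      · ext M; simp
      · rw [PTree.leaves_node_splitTree]
        exact nodup_generators
  obtain ⟨τ, τ', h, h', e, e'⟩ := key
  exact ⟨⟨_, τ, τ', isPauli_pauliTensor _, h, h', e.trans e'.symm⟩, τ, τ', h, h', e, e'⟩
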